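/- For any bounded continuous pseudometric d on a Tychonoff space X, the Kantorovich functional d̂ on the space of Radon probability measures is a pseudometric (symmetric, satisfies the triangle inequality, zero on the diagonal), and if d is a metric then d̂ is a metric; moreover diam(X, d) = diam of the space of Radon probability measures with respect to d̂. -/

import Mathlib

open MeasureTheory
open scoped ENNReal

/-- A measure is tight (Radon) if the complement of some compact set has arbitrarily
small measure. -/
def IsTightM {α : Type*} [TopologicalSpace α] {m : MeasurableSpace α} (μ : Measure α) : Prop :=
  ∀ ε : ℝ≥0∞, 0 < ε → ∃ K : Set α, IsCompact K ∧ μ Kᶜ ≤ ε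

/-- `l` is a coupling of `μ` and `η` if its marginals are `μ` and `η`. -/
def IsCoupling {α : Type*} {m : MeasurableSpace α} (l : Measure (α × α)) (μ η : Measure α) :
    Prop :=
  l.map Prod.fst = μ ∧ l.map Prod.snd = η

/-- A tight (Radon) probability measure. -/
def IsRadonProb {α : Type*} [TopologicalSpace α] {m : MeasurableSpace α}
    (μ : Measure α) : Prop :=
  IsProbabilityMeasure μ ∧ IsTightM μ

/-- The Kantorovich functional associated to a cost function `d`. -/
noncomputable def kantD {α : Type*} [TopologicalSpace α] {m : MeasurableSpace α}
    (d : α → α → ℝ) (μ η : Measure α) : ℝ :=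
  sInf {r | ∃ l : Measure (α × α), IsProbabilityMeasure l ∧ IsTightM l ∧
    IsCoupling l μ η ∧ r = ∫ p, d p.1 p.2 ∂l}

open scoped Topology Function NNReal

/-
Couplings `l₁` of `μ, η` and `l₂` of `η, ν` are glued only approximately, which needs no
disintegration. As `η` is tight, it is carried up to a null set by countably many disjoint pieces
of `d`-radius at most `ε / 2`. Over each piece, the first marginal of `l₁` and the second marginal
of `l₂` have equal mass, and joining them by their normalised product, which amounts to routing
all the mass through one point of the piece, costs at most `ε` per unit of mass more than `l₁` and
`l₂`. Hence the triangle inequality.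

If `d` is a metric and the functional vanishes at `(μ, η)`, then `μ` and `η` give the same integral
to every nonnegative Lipschitz function. The functions `min (n * d(·, K)) 1` increase to the
indicator of `Kᶜ`, so `μ` and `η` agree on every compact set `K`, and therefore coincide. For the
diameters, the Dirac measures at `x` and `y` are at distance at least `d x y`, and the product
coupling shows that the functional is at most an average of values of `d`, hence at most one of
these values.
-/

theorem biInf_eq_zero_iff_mem {X : Type*} [TopologicalSpace X] {c : PseudoMetric X ℝ≥0∞}
    (hc : ∀ y, Continuous fun x => c x y) (hsep : ∀ x y, c x y = 0 → x = y) {K : Set X}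
    (hK : IsCompact K) {x : X} : ⨅ y ∈ K, c x y = 0 ↔ x ∈ K := by
  refine ⟨fun h => ?_, fun hx => le_antisymm ((iInf₂_le x hx).trans_eq (c.refl x)) zero_le⟩
  rcases K.eq_empty_or_nonempty with rfl | hne
  · simp at h
  have hcx : Continuous fun y => c x y := by simpa only [c.symm x] using hc x
  obtain ⟨y, hy, hmin⟩ := hK.exists_isMinOn hne hcx.continuousOn
  have hxy : c x y = 0 := le_antisymm ((le_iInf₂ fun z hz => hmin hz).trans_eq h) zero_le
  exact hsep x y hxy ▸ hy

section Measures

variable {X : Type*} [MeasurableSpace X] {μ η ν : Measure X}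

namespace IsTightM

variable [TopologicalSpace X]

theorem exists_isSigmaCompact (hμ : IsTightM μ) : ∃ S, IsSigmaCompact S ∧ ∀ᵐ x ∂μ, x ∈ S := by
  choose K hK hμK using fun n : ℕ => hμ (n : ℝ≥0∞)⁻¹ (by simp)
  refine ⟨⋃ n, K n, isSigmaCompact_iUnion_of_isCompact K hK, ?_⟩
  refine le_antisymm (ge_of_tendsto' ENNReal.tendsto_inv_nat_nhds_zero fun n => ?_) zero_le
  exact (measure_mono (Set.compl_subset_compl.2 (Set.subset_iUnion K n))).trans (hμK n)

theorem exists_seq_ae_dense [Nonempty X] (hμ : IsTightM μ) {c : PseudoMetric X ℝ≥0∞}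
    (hc : ∀ y, Continuous fun x => c x y) :
    ∃ a : ℕ → X, ∀ᵐ x ∂μ, ∀ ε > 0, ∃ n, c x (a n) < ε := by
  obtain ⟨S, hS, hμS⟩ := hμ.exists_isSigmaCompact
  have hnhds (k : ℕ) (y : X) : {x | c x y < (k : ℝ≥0∞)⁻¹} ∈ 𝓝 y :=
    (isOpen_lt (hc y) continuous_const).mem_nhds (by simp)
  choose t ht _ hSt using fun k : ℕ => hS.isLindelof.elim_nhds_subcover _ fun y _ => hnhds k y
  obtain ⟨a, ha⟩ := Set.countable_iff_exists_subset_range.1 (Set.countable_iUnion ht)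
  refine ⟨a, hμS.mono fun x hx ε hε => ?_⟩
  obtain ⟨k, hk⟩ := ENNReal.exists_inv_nat_lt hε.ne'
  obtain ⟨y, hy, hxy⟩ := Set.mem_iUnion₂.1 (hSt k hx)
  obtain ⟨n, rfl⟩ := ha (Set.mem_iUnion_of_mem k hy)
  exact ⟨n, hxy.trans hk⟩

theorem exists_ae_partition [OpensMeasurableSpace X] [Nonempty X] (hμ : IsTightM μ)
    {c : PseudoMetric X ℝ≥0∞} (hc : ∀ y, Continuous fun x => c x y) {ε : ℝ≥0∞} (hε : 0 < ε) :
    ∃ (A : ℕ → Set X) (a : ℕ → X), (∀ n, MeasurableSet (A n)) ∧ Pairwise (Disjoint on A) ∧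
      (∀ᵐ x ∂μ, x ∈ ⋃ n, A n) ∧ ∀ n, ∀ x ∈ A n, c x (a n) < ε := by
  obtain ⟨a, ha⟩ := hμ.exists_seq_ae_dense hc
  refine ⟨disjointed fun n => {x | c x (a n) < ε}, a, ?_, disjoint_disjointed _, ?_, ?_⟩
  · exact MeasurableSet.disjointed fun n => (isOpen_lt (hc _) continuous_const).measurableSet
  · filter_upwards [ha] with x hx
    rw [iUnion_disjointed]
    exact Set.mem_iUnion.2 (hx ε hε)
  · exact fun n x hx => disjointed_subset _ n hx

theorem measure_le_of_isClosed (hμ : IsTightM μ) (h : ∀ K, IsCompact K → μ K ≤ η K) {B : Set X}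
    (hB : IsClosed B) : μ B ≤ η B := by
  refine ENNReal.le_of_forall_pos_le_add fun ε hε _ => ?_
  obtain ⟨K, hK, hμK⟩ := hμ ε (by simpa using hε)
  calc μ B ≤ μ (K ∩ B) + μ Kᶜ :=
        (measure_mono fun x hx => by by_cases hxK : x ∈ K <;> simp [hx, hxK]).trans
          (measure_union_le _ _)
    _ ≤ η B + ε :=
        add_le_add ((h _ (hK.inter_right hB)).trans (measure_mono Set.inter_subset_right)) hμK

theorem ext_of_isCompact [BorelSpace X] [IsFiniteMeasure μ] (hμ : IsTightM μ) (hη : IsTightM η)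
    (h : ∀ K, IsCompact K → μ K = η K) : μ = η := by
  have hclosed (B : Set X) (hB : IsClosed B) : μ B = η B :=
    le_antisymm (hμ.measure_le_of_isClosed (fun K hK => (h K hK).le) hB)
      (hη.measure_le_of_isClosed (fun K hK => (h K hK).ge) hB)
  exact ext_of_generate_finite _
    (BorelSpace.measurable_eq.trans borel_eq_generateFrom_isClosed) isPiSystem_isClosed hclosed
    (hclosed _ isClosed_univ)

end IsTightM

theorem isRadonProb_dirac [TopologicalSpace X] [OpensMeasurableSpace X] [R0Space X] (x : X) :
    IsRadonProb (Measure.dirac x) := by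
  refine ⟨inferInstance, fun ε _ => ⟨closure {x}, isCompact_closure_singleton, ?_⟩⟩
  rw [Measure.dirac_apply' _ isClosed_closure.measurableSet.compl]
  simp [subset_closure (Set.mem_singleton x)]

theorem sum_restrict_eq_self {ι : Type*} [Countable ι] {A : ι → Set X}
    (hA : ∀ i, MeasurableSet (A i)) (hdisj : Pairwise (Disjoint on A))
    (hcov : ∀ᵐ x ∂μ, x ∈ ⋃ i, A i) : Measure.sum (fun i => μ.restrict (A i)) = μ := by
  rw [← Measure.restrict_iUnion hdisj hA, Measure.restrict_eq_self_of_ae_mem hcov]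

namespace IsCoupling

variable {l l₁ l₂ : Measure (X × X)}

theorem swap (h : IsCoupling l μ η) : IsCoupling (l.map Prod.swap) η μ := by
  constructor
  · rw [Measure.map_map measurable_fst measurable_swap]
    exact h.2
  · rw [Measure.map_map measurable_snd measurable_swap]
    exact h.1

theorem diag (μ : Measure X) : IsCoupling (μ.map fun x => (x, x)) μ μ := by
  have hdiag : Measurable fun x : X => (x, x) := by fun_prop
  constructor
  · rw [Measure.map_map measurable_fst hdiag]
    exact Measure.map_id
  · rw [Measure.map_map measurable_snd hdiag]
    exact Measure.map_id

theorem sum {ι : Type*} {l : ι → Measure (X × X)} {μ η : ι → Measure X}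
    (h : ∀ i, IsCoupling (l i) (μ i) (η i)) :
    IsCoupling (Measure.sum l) (Measure.sum μ) (Measure.sum η) := by
  constructor
  · simp only [Measure.map_sum measurable_fst.aemeasurable, (h _).1]
  · simp only [Measure.map_sum measurable_snd.aemeasurable, (h _).2]

theorem restrict_fst (h : IsCoupling l μ η) {A : Set X} (hA : MeasurableSet A) :
    IsCoupling (l.restrict (Prod.fst ⁻¹' A)) (μ.restrict A)
      ((l.restrict (Prod.fst ⁻¹' A)).map Prod.snd) :=
  ⟨by rw [← Measure.restrict_map measurable_fst hA, h.1], rfl⟩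

theorem restrict_snd (h : IsCoupling l μ η) {A : Set X} (hA : MeasurableSet A) :
    IsCoupling (l.restrict (Prod.snd ⁻¹' A)) ((l.restrict (Prod.snd ⁻¹' A)).map Prod.fst)
      (η.restrict A) :=
  ⟨rfl, by rw [← Measure.restrict_map measurable_snd hA, h.2]⟩

theorem lintegral_fst (h : IsCoupling l μ η) {g : X → ℝ≥0∞} (hg : Measurable g) :
    ∫⁻ p, g p.1 ∂l = ∫⁻ x, g x ∂μ := by
  rw [← h.1, lintegral_map hg measurable_fst]

theorem lintegral_snd (h : IsCoupling l μ η) {g : X → ℝ≥0∞} (hg : Measurable g) :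
    ∫⁻ p, g p.2 ∂l = ∫⁻ x, g x ∂η := by
  rw [← h.2, lintegral_map hg measurable_snd]

theorem measure_univ_fst (h : IsCoupling l μ η) : l Set.univ = μ Set.univ := by
  rw [← h.1, Measure.map_apply measurable_fst .univ, Set.preimage_univ]

theorem measure_univ_snd (h : IsCoupling l μ η) : l Set.univ = η Set.univ := by
  rw [← h.2, Measure.map_apply measurable_snd .univ, Set.preimage_univ]

theorem isProbabilityMeasure [IsProbabilityMeasure μ] (h : IsCoupling l μ η) :
    IsProbabilityMeasure l :=
  ⟨h.measure_univ_fst.trans measure_univ⟩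

theorem isTightM [TopologicalSpace X] (h : IsCoupling l μ η) (hμ : IsTightM μ)
    (hη : IsTightM η) : IsTightM l := by
  have hiff {Y : Type _} [TopologicalSpace Y] [MeasurableSpace Y] (κ : Measure Y) :
      IsTightMeasureSet {κ} ↔ IsTightM κ := by
    simp [isTightMeasureSet_iff_exists_isCompact_measure_compl_le, IsTightM]
  rw [← hiff] at hμ hη ⊢
  exact .prodMk (by simpa [Measure.fst, h.1]) (by simpa [Measure.snd, h.2])

theorem smul_prod [IsFiniteMeasure μ] [IsFiniteMeasure η] (hmass : μ Set.univ = η Set.univ) :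
    IsCoupling ((μ Set.univ)⁻¹ • μ.prod η) μ η := by
  rcases eq_or_ne μ 0 with rfl | hμ
  · have hη : η = 0 := Measure.measure_univ_eq_zero.1 (by simpa using hmass.symm)
    simp [hη, IsCoupling]
  have hcancel : (μ Set.univ)⁻¹ * μ Set.univ = 1 :=
    ENNReal.inv_mul_cancel (by simpa using hμ) (measure_ne_top _ _)
  constructor
  · rw [Measure.map_smul, Measure.map_fst_prod, smul_smul, ← hmass, hcancel, one_smul]
  · rw [Measure.map_smul, Measure.map_snd_prod, smul_smul, hcancel, one_smul]

theorem lintegral_le_of_forall_le [IsProbabilityMeasure μ] (h : IsCoupling l μ η)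
    {c : X → X → ℝ≥0∞} {C : ℝ≥0∞} (hc : ∀ x y, c x y ≤ C) : ∫⁻ p, c p.1 p.2 ∂l ≤ C :=
  calc ∫⁻ p, c p.1 p.2 ∂l ≤ ∫⁻ _, C ∂l := lintegral_mono fun _ => hc _ _
    _ = C := by rw [lintegral_const, h.measure_univ_fst, measure_univ, mul_one]

theorem prod [IsProbabilityMeasure μ] [IsProbabilityMeasure η] : IsCoupling (μ.prod η) μ η := by
  simpa using smul_prod (μ := μ) (η := η) (by simp)

section Gluing

variable {c : PseudoMetric X ℝ≥0∞}

theorem lintegral_le_add_of_point (h : IsCoupling l μ ν) {a : X}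
    (ha : Measurable fun x => c x a) :
    ∫⁻ p, c p.1 p.2 ∂l ≤ ∫⁻ x, c x a ∂μ + ∫⁻ z, c z a ∂ν :=
  calc ∫⁻ p, c p.1 p.2 ∂l ≤ ∫⁻ p, (c p.1 a + c p.2 a) ∂l :=
        lintegral_mono fun p => (c.triangle _ a _).trans_eq (by rw [c.symm a])
    _ = ∫⁻ x, c x a ∂μ + ∫⁻ z, c z a ∂ν := by
        rw [lintegral_add_left (by fun_prop), h.lintegral_fst ha, h.lintegral_snd ha]

theorem lintegral_point_fst_le (h : IsCoupling l μ η) {a : X} (ha : Measurable fun x => c x a) :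
    ∫⁻ x, c x a ∂μ ≤ ∫⁻ p, c p.1 p.2 ∂l + ∫⁻ y, c y a ∂η :=
  calc ∫⁻ x, c x a ∂μ = ∫⁻ p, c p.1 a ∂l := (h.lintegral_fst ha).symm
    _ ≤ ∫⁻ p, (c p.1 p.2 + c p.2 a) ∂l := lintegral_mono fun _ => c.triangle _ _ _
    _ = ∫⁻ p, c p.1 p.2 ∂l + ∫⁻ y, c y a ∂η := by
        rw [lintegral_add_right _ (by fun_prop), h.lintegral_snd ha]

theorem lintegral_point_snd_le (h : IsCoupling l η ν) {a : X} (ha : Measurable fun x => c x a) :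
    ∫⁻ z, c z a ∂ν ≤ ∫⁻ p, c p.1 p.2 ∂l + ∫⁻ y, c y a ∂η :=
  calc ∫⁻ z, c z a ∂ν = ∫⁻ p, c p.2 a ∂l := (h.lintegral_snd ha).symm
    _ ≤ ∫⁻ p, (c p.1 p.2 + c p.1 a) ∂l :=
        lintegral_mono fun p => (c.triangle _ p.1 _).trans_eq (by rw [c.symm p.2])
    _ = ∫⁻ p, c p.1 p.2 ∂l + ∫⁻ y, c y a ∂η := by
        rw [lintegral_add_right _ (by fun_prop), h.lintegral_fst ha]

theorem exists_glue_of_point [IsFiniteMeasure η] (h₁ : IsCoupling l₁ μ η)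
    (h₂ : IsCoupling l₂ η ν) {a : X} (ha : Measurable fun x => c x a) :
    ∃ l, IsCoupling l μ ν ∧
      ∫⁻ p, c p.1 p.2 ∂l ≤
        ∫⁻ p, c p.1 p.2 ∂l₁ + ∫⁻ p, c p.1 p.2 ∂l₂ + 2 * ∫⁻ y, c y a ∂η := by
  have hμη : μ Set.univ = η Set.univ := h₁.measure_univ_fst.symm.trans h₁.measure_univ_snd
  have hην : η Set.univ = ν Set.univ := h₂.measure_univ_fst.symm.trans h₂.measure_univ_snd
  have : IsFiniteMeasure μ := ⟨hμη.trans_lt (measure_lt_top _ _)⟩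
  have : IsFiniteMeasure ν := ⟨hην.symm.trans_lt (measure_lt_top _ _)⟩
  have hl := smul_prod (hμη.trans hην)
  refine ⟨_, hl, (hl.lintegral_le_add_of_point ha).trans ?_⟩
  refine (add_le_add (h₁.lintegral_point_fst_le ha) (h₂.lintegral_point_snd_le ha)).trans_eq ?_
  ring

theorem exists_glue_of_partition {ι : Type*} [Countable ι] [IsFiniteMeasure η]
    (h₁ : IsCoupling l₁ μ η) (h₂ : IsCoupling l₂ η ν) {A : ι → Set X} {a : ι → X}
    (hA : ∀ i, MeasurableSet (A i)) (hdisj : Pairwise (Disjoint on A))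
    (hcov : ∀ᵐ y ∂η, y ∈ ⋃ i, A i) (ha : ∀ i, Measurable fun x => c x (a i)) :
    ∃ l, IsCoupling l μ ν ∧
      ∫⁻ p, c p.1 p.2 ∂l ≤ ∫⁻ p, c p.1 p.2 ∂l₁ + ∫⁻ p, c p.1 p.2 ∂l₂ +
        2 * ∑' i, ∫⁻ y in A i, c y (a i) ∂η := by
  choose l hl hle using fun i =>
    (h₁.restrict_snd (hA i)).exists_glue_of_point (h₂.restrict_fst (hA i)) (ha i)
  have hsum₁ : Measure.sum (fun i => l₁.restrict (Prod.snd ⁻¹' A i)) = l₁ :=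
    sum_restrict_eq_self (fun i => measurable_snd (hA i)) (hdisj.mono fun _ _ hij => hij.preimage _)
      (by
        rw [← Set.preimage_iUnion]
        exact ae_of_ae_map measurable_snd.aemeasurable (h₁.2 ▸ hcov))
  have hsum₂ : Measure.sum (fun i => l₂.restrict (Prod.fst ⁻¹' A i)) = l₂ :=
    sum_restrict_eq_self (fun i => measurable_fst (hA i)) (hdisj.mono fun _ _ hij => hij.preimage _)
      (by
        rw [← Set.preimage_iUnion]
        exact ae_of_ae_map measurable_fst.aemeasurable (h₂.1 ▸ hcov))
  refine ⟨Measure.sum l, ?_, ?_⟩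
  · have hl_sum := IsCoupling.sum hl
    rwa [← Measure.map_sum measurable_fst.aemeasurable, hsum₁, h₁.1,
      ← Measure.map_sum measurable_snd.aemeasurable, hsum₂, h₂.2] at hl_sum
  · calc ∫⁻ p, c p.1 p.2 ∂(Measure.sum l) = ∑' i, ∫⁻ p, c p.1 p.2 ∂(l i) :=
          lintegral_sum_measure _ _
      _ ≤ _ := ENNReal.tsum_le_tsum hle
      _ = _ := by
          simp only [ENNReal.tsum_add, ENNReal.tsum_mul_left, ← lintegral_sum_measure, hsum₁, hsum₂]

end Gluing

/- A continuous cost need not be measurable for the product σ-algebra, which may be smaller than the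
Borel σ-algebra of `X × X`. Tightness of a marginal provides a dense sequence `a`, and
`c x y = ⨅ n, c x (a n) + c y (a n)` almost everywhere. -/
theorem aemeasurable_cost [TopologicalSpace X] [OpensMeasurableSpace X] (h : IsCoupling l μ η)
    (hη : IsTightM η) {c : PseudoMetric X ℝ≥0∞} (hc : ∀ y, Continuous fun x => c x y) :
    AEMeasurable (fun p => c p.1 p.2) l := by
  cases isEmpty_or_nonempty X
  · exact measurable_of_empty _ |>.aemeasurable
  obtain ⟨a, ha⟩ := hη.exists_seq_ae_dense hc
  have hmeas (n : ℕ) : Measurable fun x => c x (a n) := (hc _).measurable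
  refine ⟨fun p => ⨅ n, c p.1 (a n) + c p.2 (a n), by fun_prop, ?_⟩
  filter_upwards [ae_of_ae_map measurable_snd.aemeasurable (h.2 ▸ ha)] with p hp
  refine le_antisymm (le_iInf fun n => (c.triangle _ _ _).trans_eq (by rw [c.symm (a n)])) ?_
  refine ENNReal.le_of_forall_pos_le_add fun ε hε _ => ?_
  obtain ⟨n, hn⟩ := hp (ε / 2) (ENNReal.half_pos (ENNReal.coe_pos.2 hε).ne')
  calc ⨅ n, c p.1 (a n) + c p.2 (a n) ≤ c p.1 (a n) + c p.2 (a n) := iInf_le _ n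
    _ ≤ c p.1 p.2 + c p.2 (a n) + c p.2 (a n) := by gcongr; exact c.triangle _ _ _
    _ ≤ c p.1 p.2 + (ε / 2 + ε / 2) := by rw [add_assoc]; gcongr
    _ = c p.1 p.2 + ε := by rw [ENNReal.add_halves]

end IsCoupling

/-- The Kantorovich functional of a `[0, ∞]`-valued cost. Lebesgue integrals make sense for every
coupling, so no boundedness or tightness enters the definition; for bounded continuous
pseudometrics and tight probability measures, `kantD` is its real-valued counterpart. -/
noncomputable def ekantD (c : X → X → ℝ≥0∞) (μ η : Measure X) : ℝ≥0∞ :=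
  ⨅ (l : Measure (X × X)) (_ : IsCoupling l μ η), ∫⁻ p, c p.1 p.2 ∂l

section ekantD

theorem IsCoupling.ekantD_le {l : Measure (X × X)} (h : IsCoupling l μ η) (c : X → X → ℝ≥0∞) :
    ekantD c μ η ≤ ∫⁻ p, c p.1 p.2 ∂l :=
  iInf₂_le l h

theorem ekantD_comm {c : X → X → ℝ≥0∞} (hc : ∀ x y, c x y = c y x) (μ η : Measure X) :
    ekantD c μ η = ekantD c η μ := by
  have hle (μ η : Measure X) : ekantD c μ η ≤ ekantD c η μ := by
    refine le_iInf₂ fun l hl => (hl.swap.ekantD_le c).trans ?_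
    refine (lintegral_map_le _ _).trans_eq (lintegral_congr fun p => hc _ _)
  exact le_antisymm (hle μ η) (hle η μ)

theorem ekantD_self {c : X → X → ℝ≥0∞} (hc : ∀ x, c x x = 0) (μ : Measure X) :
    ekantD c μ μ = 0 := by
  refine le_antisymm (((IsCoupling.diag μ).ekantD_le c).trans ?_) zero_le
  exact (lintegral_map_le _ _).trans_eq (by simp [hc])

theorem lintegral_le_mul_ekantD_add {c : X → X → ℝ≥0∞} {g : X → ℝ≥0∞} (hg : Measurable g)
    {k : ℝ≥0} (hk : k ≠ 0) (hgc : ∀ x y, g x ≤ k * c x y + g y) (μ η : Measure X) :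
    ∫⁻ x, g x ∂μ ≤ k * ekantD c μ η + ∫⁻ x, g x ∂η := by
  simp only [ekantD, ENNReal.mul_iInf_of_ne (ENNReal.coe_ne_zero.2 hk) ENNReal.coe_ne_top,
    ENNReal.iInf_add]
  refine le_iInf₂ fun l hl => ?_
  calc ∫⁻ x, g x ∂μ = ∫⁻ p, g p.1 ∂l := (hl.lintegral_fst hg).symm
    _ ≤ ∫⁻ p, (k * c p.1 p.2 + g p.2) ∂l := lintegral_mono fun _ => hgc _ _
    _ = k * ∫⁻ p, c p.1 p.2 ∂l + ∫⁻ x, g x ∂η := by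
        rw [lintegral_add_right _ (by fun_prop), lintegral_const_mul' _ _ ENNReal.coe_ne_top,
          hl.lintegral_snd hg]

theorem lintegral_eq_of_ekantD_eq_zero {c : X → X → ℝ≥0∞} (hc : ∀ x y, c x y = c y x)
    (h : ekantD c μ η = 0) {g : X → ℝ≥0∞} (hg : Measurable g) {k : ℝ≥0}
    (hk : k ≠ 0) (hgc : ∀ x y, g x ≤ k * c x y + g y) : ∫⁻ x, g x ∂μ = ∫⁻ x, g x ∂η := by
  refine le_antisymm ?_ ?_
  · simpa [h] using lintegral_le_mul_ekantD_add hg hk hgc μ η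
  · simpa [ekantD_comm hc η μ, h] using lintegral_le_mul_ekantD_add hg hk hgc η μ

theorem iSup_lintegral_min_nat_mul_one {g : X → ℝ≥0∞} (hg : Measurable g) :
    ⨆ n : ℕ, ∫⁻ x, min (n * g x) 1 ∂μ = μ {x | g x ≠ 0} := by
  have hmono : Monotone fun (n : ℕ) x => min (n * g x) 1 := fun m n hmn x => by
    dsimp only
    gcongr
  have hmeas : MeasurableSet {x | g x ≠ 0} := (measurableSet_singleton (0 : ℝ≥0∞)).compl.preimage hg
  rw [← lintegral_iSup (fun n => by fun_prop) hmono, ← lintegral_indicator_one hmeas]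
  refine lintegral_congr fun x => ?_
  by_cases hx : g x = 0
  · simp [hx]
  · obtain ⟨n, hn⟩ := ENNReal.exists_nat_mul_gt hx ENNReal.one_ne_top
    have hxg : x ∈ {x | g x ≠ 0} := hx
    rw [Set.indicator_of_mem hxg]
    exact le_antisymm (iSup_le fun _ => min_le_right _ _)
      (le_iSup_of_le n (le_min hn.le le_rfl))

theorem measure_ne_zero_eq_of_ekantD_eq_zero {c : X → X → ℝ≥0∞} (hc : ∀ x y, c x y = c y x)
    (h : ekantD c μ η = 0) {g : X → ℝ≥0∞} (hg : Measurable g)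
    (hgc : ∀ x y, g x ≤ c x y + g y) : μ {x | g x ≠ 0} = η {x | g x ≠ 0} := by
  have hlip (n : ℕ) (x y : X) : min (n * g x) 1 ≤ (n : ℝ≥0) * c x y + min (n * g y) 1 :=
    calc min (n * g x) 1 ≤ min (n * c x y + n * g y) (n * c x y + 1) := by
          refine min_le_min ?_ le_add_self
          rw [← mul_add]
          gcongr
          exact hgc x y
      _ = (n : ℝ≥0) * c x y + min (n * g y) 1 := by rw [min_add_add_left, ENNReal.coe_natCast]
  rw [← iSup_lintegral_min_nat_mul_one hg, ← iSup_lintegral_min_nat_mul_one hg]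
  refine iSup_congr fun n => ?_
  rcases eq_or_ne n 0 with rfl | hn
  · simp
  · exact lintegral_eq_of_ekantD_eq_zero hc h (by fun_prop) (Nat.cast_ne_zero.2 hn) (hlip n)

theorem le_ekantD_dirac {c : PseudoMetric X ℝ≥0∞} {y : X} (hy : Measurable fun x => c x y)
    (x : X) : c x y ≤ ekantD c (.dirac x) (.dirac y) := by
  simpa [lintegral_dirac' _ hy] using
    lintegral_le_mul_ekantD_add hy one_ne_zero (fun z w => by simpa using c.triangle z w y)
      (.dirac x) (.dirac y)

theorem exists_ekantD_le [IsProbabilityMeasure μ] [IsProbabilityMeasure η]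
    {c : X → X → ℝ≥0∞} {C : ℝ≥0∞} (hC : C ≠ ∞) (hc : ∀ x y, c x y ≤ C) :
    ∃ x y, ekantD c μ η ≤ c x y := by
  obtain ⟨p, hp⟩ := exists_lintegral_le
    (ne_top_of_le_ne_top hC ((IsCoupling.prod (μ := μ) (η := η)).lintegral_le_of_forall_le hc))
  exact ⟨p.1, p.2, (IsCoupling.prod.ekantD_le c).trans hp⟩

variable [TopologicalSpace X] {c : PseudoMetric X ℝ≥0∞}

theorem ekantD_triangle [OpensMeasurableSpace X] [IsProbabilityMeasure η] (hη : IsTightM η)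
    (hc : ∀ y, Continuous fun x => c x y) (μ ν : Measure X) :
    ekantD c μ ν ≤ ekantD c μ η + ekantD c η ν := by
  refine ENNReal.le_iInf₂_add_iInf₂ fun l₁ h₁ l₂ h₂ => ?_
  refine ENNReal.le_of_forall_pos_le_add fun ε hε _ => ?_
  have : Nonempty X := nonempty_of_isProbabilityMeasure η
  obtain ⟨A, a, hA, hdisj, hcov, hlt⟩ :=
    hη.exists_ae_partition hc (ENNReal.half_pos (ENNReal.coe_pos.2 hε).ne')
  obtain ⟨l, hl, hle⟩ :=
    h₁.exists_glue_of_partition h₂ hA hdisj hcov fun n => (hc (a n)).measurable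
  have herr : ∑' n, ∫⁻ y in A n, c y (a n) ∂η ≤ ε / 2 :=
    calc ∑' n, ∫⁻ y in A n, c y (a n) ∂η ≤ ∑' n, ∫⁻ _ in A n, (ε / 2 : ℝ≥0∞) ∂η :=
          ENNReal.tsum_le_tsum fun n => setLIntegral_mono' (hA n) fun y hy => (hlt n y hy).le
      _ = ε / 2 := by
          rw [← lintegral_sum_measure, sum_restrict_eq_self hA hdisj hcov]
          simp
  calc ekantD c μ ν ≤ ∫⁻ p, c p.1 p.2 ∂l := hl.ekantD_le c
    _ ≤ ∫⁻ p, c p.1 p.2 ∂l₁ + ∫⁻ p, c p.1 p.2 ∂l₂ + 2 * (ε / 2) := hle.trans (by gcongr)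
    _ = ∫⁻ p, c p.1 p.2 ∂l₁ + ∫⁻ p, c p.1 p.2 ∂l₂ + ε := by
        rw [ENNReal.mul_div_cancel two_ne_zero ENNReal.ofNat_ne_top]

theorem eq_of_ekantD_eq_zero [BorelSpace X] [IsFiniteMeasure μ] [IsFiniteMeasure η]
    (hμ : IsTightM μ) (hη : IsTightM η) (hc : ∀ y, Continuous fun x => c x y)
    (hsep : ∀ x y, c x y = 0 → x = y) (h : ekantD c μ η = 0) : μ = η := by
  have hcompl {K : Set X} (hK : IsCompact K) : MeasurableSet K ∧ μ Kᶜ = η Kᶜ := by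
    let g (x : X) : ℝ≥0∞ := ⨅ y ∈ K, c x y
    have hg : Measurable g :=
      (upperSemicontinuous_biInf fun y _ => (hc y).upperSemicontinuous).measurable
    have hgc (x y : X) : g x ≤ c x y + g y := by
      simp only [g, ENNReal.add_iInf]
      exact iInf₂_mono fun z _ => c.triangle x y z
    have hgK : {x | g x ≠ 0} = Kᶜ := Set.ext fun x => (biInf_eq_zero_iff_mem hc hsep hK).not
    refine ⟨?_, hgK ▸ measure_ne_zero_eq_of_ekantD_eq_zero c.symm h hg hgc⟩
    rw [← compl_compl K, ← hgK]
    exact ((measurableSet_singleton (0 : ℝ≥0∞)).compl.preimage hg).compl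
  have huniv : μ Set.univ = η Set.univ := by simpa using (hcompl isCompact_empty).2
  refine hμ.ext_of_isCompact hη fun K hK => ?_
  obtain ⟨hKmeas, hK⟩ := hcompl hK
  rw [← compl_compl K, measure_compl hKmeas.compl (measure_ne_top _ _),
    measure_compl hKmeas.compl (measure_ne_top _ _), hK, huniv]

end ekantD

/-- The `[0, ∞]`-valued pseudometric with the same values as the real pseudometric `d`, so that the
results on `ekantD` apply to `kantD d`. -/
noncomputable def ennrealPseudoMetric {X : Type*} (d : PseudoMetric X ℝ) :
    PseudoMetric X ℝ≥0∞ where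
  toFun x y := ENNReal.ofReal (d x y)
  refl' x := by simp
  symm' x y := by rw [d.symm]
  triangle' x y z := by
    rw [← ENNReal.ofReal_add (d.nonneg x y) (d.nonneg y z)]
    exact ENNReal.ofReal_le_ofReal (d.triangle x y z)

theorem toReal_ennrealPseudoMetric {X : Type*} (d : PseudoMetric X ℝ) (x y : X) :
    (ennrealPseudoMetric d x y).toReal = d x y :=
  ENNReal.toReal_ofReal (d.nonneg x y)

theorem continuous_ennrealPseudoMetric {X : Type*} [TopologicalSpace X] {d : PseudoMetric X ℝ}
    (hd : ∀ y, Continuous fun x => d x y) (y : X) :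
    Continuous fun x => ennrealPseudoMetric d x y :=
  ENNReal.continuous_ofReal.comp (hd y)

section kantD

variable {d : PseudoMetric X ℝ}

theorem exists_ekantD_le_of_bounded [IsProbabilityMeasure μ] [IsProbabilityMeasure η] {C : ℝ}
    (hC : ∀ x y, d x y ≤ C) :
    ∃ x y, ekantD (ennrealPseudoMetric d) μ η ≤ ennrealPseudoMetric d x y :=
  exists_ekantD_le ENNReal.ofReal_ne_top fun x y => ENNReal.ofReal_le_ofReal (hC x y)

theorem ekantD_ne_top_of_bounded [IsProbabilityMeasure μ] [IsProbabilityMeasure η] {C : ℝ}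
    (hC : ∀ x y, d x y ≤ C) : ekantD (ennrealPseudoMetric d) μ η ≠ ∞ := by
  obtain ⟨x, y, hxy⟩ := exists_ekantD_le_of_bounded (μ := μ) (η := η) hC
  exact ne_top_of_le_ne_top ENNReal.ofReal_ne_top hxy

variable [TopologicalSpace X]

theorem IsCoupling.integral_eq_toReal_lintegral [OpensMeasurableSpace X] {l : Measure (X × X)}
    (h : IsCoupling l μ η) (hη : IsTightM η) (hd : ∀ y, Continuous fun x => d x y) :
    ∫ p, d p.1 p.2 ∂l = (∫⁻ p, ennrealPseudoMetric d p.1 p.2 ∂l).toReal := by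
  rw [← integral_toReal (h.aemeasurable_cost hη (continuous_ennrealPseudoMetric hd))
    (.of_forall fun p => ENNReal.ofReal_lt_top)]
  simp only [toReal_ennrealPseudoMetric]

theorem kantD_eq_toReal_ekantD [OpensMeasurableSpace X] (hμ : IsRadonProb μ) (hη : IsRadonProb η)
    (hd : ∀ y, Continuous fun x => d x y) {C : ℝ} (hC : ∀ x y, d x y ≤ C) :
    kantD d μ η = (ekantD (ennrealPseudoMetric d) μ η).toReal := by
  have := hμ.1
  let cost (l : Measure (X × X)) : ℝ≥0∞ := ∫⁻ p, ennrealPseudoMetric d p.1 p.2 ∂l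
  have hset : {r | ∃ l : Measure (X × X), IsProbabilityMeasure l ∧ IsTightM l ∧
      IsCoupling l μ η ∧ r = ∫ p, d p.1 p.2 ∂l} =
        ENNReal.toReal '' (cost '' {l | IsCoupling l μ η}) := by
    rw [Set.image_image]
    ext r
    constructor
    · rintro ⟨l, -, -, hl, rfl⟩
      exact ⟨l, hl, (hl.integral_eq_toReal_lintegral hη.2 hd).symm⟩
    · rintro ⟨l, hl, rfl⟩
      exact ⟨l, hl.isProbabilityMeasure, hl.isTightM hμ.2 hη.2, hl,
        (hl.integral_eq_toReal_lintegral hη.2 hd).symm⟩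
  have hfin : ∀ r ∈ cost '' {l | IsCoupling l μ η}, r ≠ ∞ := by
    rintro _ ⟨l, hl, rfl⟩
    exact ne_top_of_le_ne_top ENNReal.ofReal_ne_top
      (hl.lintegral_le_of_forall_le fun x y => ENNReal.ofReal_le_ofReal (hC x y))
  rw [kantD, hset, ← ENNReal.toReal_sInf _ hfin, sInf_image]
  rfl

theorem kantD_triangle [OpensMeasurableSpace X] (hμ : IsRadonProb μ) (hη : IsRadonProb η)
    (hν : IsRadonProb ν) (hd : ∀ y, Continuous fun x => d x y) {C : ℝ} (hC : ∀ x y, d x y ≤ C) :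
    kantD d μ ν ≤ kantD d μ η + kantD d η ν := by
  have := hμ.1
  have := hη.1
  have := hν.1
  have hμη := ekantD_ne_top_of_bounded (μ := μ) (η := η) hC
  have hην := ekantD_ne_top_of_bounded (μ := η) (η := ν) hC
  rw [kantD_eq_toReal_ekantD hμ hν hd hC, kantD_eq_toReal_ekantD hμ hη hd hC,
    kantD_eq_toReal_ekantD hη hν hd hC, ← ENNReal.toReal_add hμη hην]
  exact ENNReal.toReal_mono (ENNReal.add_ne_top.2 ⟨hμη, hην⟩)
    (ekantD_triangle hη.2 (continuous_ennrealPseudoMetric hd) μ ν)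

theorem eq_of_kantD_eq_zero [BorelSpace X] (hμ : IsRadonProb μ) (hη : IsRadonProb η)
    (hd : ∀ y, Continuous fun x => d x y) {C : ℝ} (hC : ∀ x y, d x y ≤ C)
    (hsep : ∀ x y, d x y = 0 → x = y) (h : kantD d μ η = 0) : μ = η := by
  have := hμ.1
  have := hη.1
  rw [kantD_eq_toReal_ekantD hμ hη hd hC, ENNReal.toReal_eq_zero_iff] at h
  refine eq_of_ekantD_eq_zero hμ.2 hη.2 (continuous_ennrealPseudoMetric hd) (fun x y hxy => ?_)
    (h.resolve_right (ekantD_ne_top_of_bounded hC))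
  exact hsep x y (by rw [← toReal_ennrealPseudoMetric, hxy, ENNReal.toReal_zero])

theorem le_kantD_dirac [OpensMeasurableSpace X] [R0Space X] (hd : ∀ y, Continuous fun x => d x y)
    {C : ℝ} (hC : ∀ x y, d x y ≤ C) (x y : X) : d x y ≤ kantD d (.dirac x) (.dirac y) := by
  rw [kantD_eq_toReal_ekantD (isRadonProb_dirac x) (isRadonProb_dirac y) hd hC,
    ← toReal_ennrealPseudoMetric]
  exact ENNReal.toReal_mono (ekantD_ne_top_of_bounded hC)
    (le_ekantD_dirac (continuous_ennrealPseudoMetric hd y).measurable x)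

theorem exists_kantD_le [OpensMeasurableSpace X] (hμ : IsRadonProb μ) (hη : IsRadonProb η)
    (hd : ∀ y, Continuous fun x => d x y) {C : ℝ} (hC : ∀ x y, d x y ≤ C) :
    ∃ x y, kantD d μ η ≤ d x y := by
  have := hμ.1
  have := hη.1
  obtain ⟨x, y, hxy⟩ := exists_ekantD_le_of_bounded (μ := μ) (η := η) hC
  refine ⟨x, y, ?_⟩
  rw [kantD_eq_toReal_ekantD hμ hη hd hC, ← toReal_ennrealPseudoMetric]
  exact ENNReal.toReal_mono ENNReal.ofReal_ne_top hxy

theorem sSup_eq_sSup_kantD [OpensMeasurableSpace X] [R0Space X]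
    (hd : ∀ y, Continuous fun x => d x y) {C : ℝ} (hC : ∀ x y, d x y ≤ C) :
    sSup {r | ∃ x y : X, r = d x y} =
      sSup {r | ∃ μ η : Measure X, IsRadonProb μ ∧ IsRadonProb η ∧ r = kantD d μ η} := by
  refine csSup_eq_csSup_of_forall_exists_le ?_ ?_
  · rintro _ ⟨x, y, rfl⟩
    exact ⟨_, ⟨_, _, isRadonProb_dirac x, isRadonProb_dirac y, rfl⟩, le_kantD_dirac hd hC x y⟩
  · rintro _ ⟨μ, η, hμ, hη, rfl⟩
    obtain ⟨x, y, hxy⟩ := exists_kantD_le hμ hη hd hC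
    exact ⟨_, ⟨x, y, rfl⟩, hxy⟩

end kantD

end Measures

theorem stmt12_general {X : Type*} [TopologicalSpace X] [R0Space X] [MeasurableSpace X]
    [BorelSpace X] (d : PseudoMetric X ℝ) (hd : ∀ y, Continuous fun x => d x y)
    (hbdd : ∃ C : ℝ, ∀ x y, d x y ≤ C) :
    (∀ μ η : Measure X, IsRadonProb μ → IsRadonProb η → kantD d μ η = kantD d η μ) ∧
    (∀ μ : Measure X, IsRadonProb μ → kantD d μ μ = 0) ∧
    (∀ μ η ν : Measure X, IsRadonProb μ → IsRadonProb η → IsRadonProb ν →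
      kantD d μ ν ≤ kantD d μ η + kantD d η ν) ∧
    ((∀ x y, d x y = 0 → x = y) →
      ∀ μ η : Measure X, IsRadonProb μ → IsRadonProb η → kantD d μ η = 0 → μ = η) ∧
    sSup {r | ∃ x y : X, r = d x y} =
      sSup {r | ∃ μ η : Measure X, IsRadonProb μ ∧ IsRadonProb η ∧ r = kantD d μ η} := by
  obtain ⟨C, hC⟩ := hbdd
  refine ⟨fun μ η hμ hη => ?_, fun μ hμ => ?_, fun μ η ν hμ hη hν => ?_,
    fun hsep μ η hμ hη => ?_, ?_⟩
  · rw [kantD_eq_toReal_ekantD hμ hη hd hC, kantD_eq_toReal_ekantD hη hμ hd hC,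
      ekantD_comm (ennrealPseudoMetric d).symm]
  · rw [kantD_eq_toReal_ekantD hμ hμ hd hC, ekantD_self (ennrealPseudoMetric d).refl,
      ENNReal.toReal_zero]
  · exact kantD_triangle hμ hη hν hd hC
  · exact eq_of_kantD_eq_zero hμ hη hd hC hsep
  · exact sSup_eq_sSup_kantD hd hC

/-- For a bounded continuous pseudometric `d` on a Tychonoff space `X`, the Kantorovich
functional `d̂` is a pseudometric on the Radon probability measures; if `d` is a metric then
`d̂` is a metric; and `diam (X,d) = diam (HP(X), d̂)`. -/
theorem stmt12 {X : Type*} [TopologicalSpace X] [T2Space X] [CompletelyRegularSpace X]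
    [MeasurableSpace X] [BorelSpace X]
    (d : X → X → ℝ) (hdcont : Continuous fun p : X × X => d p.1 p.2)
    (hdsymm : ∀ x y, d x y = d y x) (hdself : ∀ x, d x x = 0)
    (hdtri : ∀ x y z, d x z ≤ d x y + d y z)
    (hdbdd : ∃ C : ℝ, ∀ x y, d x y ≤ C) :
    (∀ μ η : Measure X, IsRadonProb μ → IsRadonProb η → kantD d μ η = kantD d η μ) ∧
    (∀ μ : Measure X, IsRadonProb μ → kantD d μ μ = 0) ∧
    (∀ μ η ν : Measure X, IsRadonProb μ → IsRadonProb η → IsRadonProb ν →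
      kantD d μ ν ≤ kantD d μ η + kantD d η ν) ∧
    ((∀ x y, d x y = 0 → x = y) →
      ∀ μ η : Measure X, IsRadonProb μ → IsRadonProb η → kantD d μ η = 0 → μ = η) ∧
    sSup {r | ∃ x y : X, r = d x y} =
      sSup {r | ∃ μ η : Measure X, IsRadonProb μ ∧ IsRadonProb η ∧ r = kantD d μ η} := by
  exact stmt12_general ⟨d, hdself, hdsymm, hdtri⟩ (fun y => hdcont.comp (.prodMk_left y)) hdbdd
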